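/- Let n ≥ 1, let Ω ⊆ ℝⁿ be open, and let I ⊆ ℝ be a compact interval. For each k ∈ ℕ let (Γ_k)^μ_{ρν} : Ω → ℝ be continuous connection coefficients and let Γ^μ_{ρν} : Ω → ℝ be continuous, with sup_{x∈Ω} |(Γ_k)^μ_{ρν}(x) − Γ^μ_{ρν}(x)| → 0 as k → ∞ for all indices. Let γ_k : I → Ω be twice continuously differentiable solutions of the geodesic equation for Γ_k, and let γ : I → ℝⁿ with γ(I) ⊆ Ω and v : I → ℝⁿ be such that sup_{t∈I} |γ_k(t) − γ(t)| → 0 and sup_{t∈I} |γ̇_k(t) − v(t)| → 0 as k → ∞. Then γ is twice continuously differentiable on I with γ̇ = v, and γ solves the geodesic equation for Γ on I: γ̈^μ(t) + Σ_{ρ,ν} Γ^μ_{ρν}(γ(t)) γ̇^ρ(t) γ̇^ν(t) = 0 for all t ∈ I and all μ. -/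

import Mathlib

/-!
Geodesics are the integral curves of the geodesic spray `(x, u) ↦ (u, -Γ(x)(u, u))` on the tangent
bundle, and uniform convergence of connections makes the sprays converge locally uniformly. Along
curves `zₖ → z` with `zₖ' = Xₖ(zₖ)`, local uniform convergence `Xₖ → X` to a continuous limit forces
`zₖ' → X(z)` locally uniformly. By the mean value inequality the difference quotients of `zₖ` then
converge uniformly too, so the limits `k → ∞` and `s → t` may be interchanged, whence `z' = X(z)`.
-/

open Filter Set Topology

section LocallyUniform

variable {ι α β γ : Type*} [TopologicalSpace α] [UniformSpace γ] {l : Filter ι} {s : Set α}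

theorem tendstoLocallyUniformlyOn_iff_tendsto_prod_nhdsWithin {F : ι → α → γ} {f : α → γ}
    (hf : ContinuousOn f s) :
    TendstoLocallyUniformlyOn F f l s ↔
      ∀ x ∈ s, Tendsto (fun p : ι × α => F p.1 p.2) (l ×ˢ 𝓝[s] x) (𝓝 (f x)) := by
  rw [tendstoLocallyUniformlyOn_iff_forall_tendsto]
  refine forall₂_congr fun x hx => ?_
  have hfx : Tendsto (fun p : ι × α => f p.2) (l ×ˢ 𝓝[s] x) (𝓝 (f x)) :=
    (hf x hx).tendsto.comp tendsto_snd
  exact ⟨fun h => (Uniform.tendsto_congr h).1 hfx,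
    fun h => (hfx.prodMk_nhds h).mono_right (nhds_le_uniformity _)⟩

theorem tendstoLocallyUniformlyOn_comp_of_continuousOn [UniformSpace β]
    {F : ι → β → γ} {f : β → γ} {G : ι → α → β} {g : α → β} {t : Set β}
    (hF : TendstoLocallyUniformlyOn F f l t) (hf : ContinuousOn f t)
    (hG : TendstoLocallyUniformlyOn G g l s) (hg : ContinuousOn g s)
    (hGt : ∀ᶠ n in l, MapsTo (G n) s t) (hgt : MapsTo g s t) :
    TendstoLocallyUniformlyOn (fun n => F n ∘ G n) (f ∘ g) l s := by
  rw [tendstoLocallyUniformlyOn_iff_tendsto_prod_nhdsWithin hf] at hF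
  rw [tendstoLocallyUniformlyOn_iff_tendsto_prod_nhdsWithin hg] at hG
  rw [tendstoLocallyUniformlyOn_iff_tendsto_prod_nhdsWithin (hf.comp hg hgt)]
  intro x hx
  have hGmem : ∀ᶠ p : ι × α in l ×ˢ 𝓝[s] x, G p.1 p.2 ∈ t := by
    filter_upwards [hGt.prod_mk eventually_mem_nhdsWithin] with p hp using hp.1 hp.2
  exact (hF (g x) (hgt hx)).comp
    (tendsto_fst.prodMk (tendsto_nhdsWithin_iff.2 ⟨hG x hx, hGmem⟩))

end LocallyUniform

section Derivative

variable {ι 𝕜 E : Type*} [RCLike 𝕜] [NormedAddCommGroup E] [NormedSpace 𝕜 E]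
  {l : Filter ι} {s : Set 𝕜}

theorem uniformCauchySeqOnFilter_slope {F F' : ι → 𝕜 → E} {x : 𝕜} (hs : Convex ℝ s) (hx : x ∈ s)
    (hF : ∀ᶠ n in l, ∀ y ∈ s, HasDerivWithinAt (F n) (F' n y) s y)
    (hF' : UniformCauchySeqOnFilter F' l (𝓝[s] x)) :
    UniformCauchySeqOnFilter (fun n => slope (F n) x) l (𝓝[s] x) := by
  intro U hU
  obtain ⟨ε, hε, hεU⟩ := Metric.mem_uniformity_dist.1 hU
  obtain ⟨P, hP, Q, hQ, hPQ⟩ := eventually_prod_iff.1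
    (hF' _ (Metric.dist_mem_uniformity (half_pos hε)))
  obtain ⟨δ, hδ, hball⟩ := Metric.mem_nhdsWithin_iff.1 hQ
  set B := Metric.ball x δ ∩ s
  have hB : Convex ℝ B := (convex_ball x δ).inter hs
  have hxB : x ∈ B := ⟨Metric.mem_ball_self hδ, hx⟩
  have hBmem : ∀ᶠ y in 𝓝[s] x, y ∈ B :=
    inter_mem (mem_nhdsWithin_of_mem_nhds (Metric.ball_mem_nhds x hδ)) self_mem_nhdsWithin
  filter_upwards [(hP.and (hF.prod_mk hF)).prod_mk hBmem]
  rintro ⟨⟨m, n⟩, y⟩ ⟨⟨hmn, hm, hn⟩, hy⟩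
  have deriv_sub_le : ∀ u ∈ B, ‖F' m u - F' n u‖ ≤ ε / 2 := fun u hu => by
    rw [← dist_eq_norm]
    exact le_of_lt (hPQ hmn (hball hu))
  have mean_value : ‖(F m - F n) y - (F m - F n) x‖ ≤ ε / 2 * ‖y - x‖ :=
    hB.norm_image_sub_le_of_norm_hasDerivWithin_le
      (fun u hu => ((hm u hu.2).sub (hn u hu.2)).mono inter_subset_right)
      deriv_sub_le hxB hy
  apply hεU
  calc dist (slope (F m) x y) (slope (F n) x y)
      = ‖y - x‖⁻¹ * ‖(F m - F n) y - (F m - F n) x‖ := by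
        rw [dist_eq_norm, slope_def_module, slope_def_module, ← smul_sub, norm_smul, norm_inv,
          Pi.sub_apply, Pi.sub_apply, sub_sub_sub_comm]
    _ ≤ ‖y - x‖⁻¹ * (ε / 2 * ‖y - x‖) := by gcongr
    _ = ε / 2 * (‖y - x‖ / ‖y - x‖) := by ring
    _ ≤ ε / 2 := mul_le_of_le_one_right (half_pos hε).le (div_self_le_one _)
    _ < ε := half_lt_self hε

theorem hasDerivWithinAt_of_tendstoLocallyUniformlyOn_of_convex [l.NeBot]
    {F F' : ι → 𝕜 → E} {f f' : 𝕜 → E} {x : 𝕜} (hs : Convex ℝ s)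
    (hF : ∀ᶠ n in l, ∀ y ∈ s, HasDerivWithinAt (F n) (F' n y) s y)
    (hf : ∀ y ∈ s, Tendsto (fun n => F n y) l (𝓝 (f y)))
    (hF' : TendstoLocallyUniformlyOn F' f' l s) (hx : x ∈ s) :
    HasDerivWithinAt f (f' x) s x := by
  have slope_tendsto : ∀ y ∈ s, Tendsto (fun n => slope (F n) x y) l (𝓝 (slope f x y)) :=
    fun y hy => ((hf y hy).sub (hf x hx)).const_smul _
  have slope_uniform : TendstoUniformlyOnFilter (fun n => slope (F n) x) (slope f x) l (𝓝[s] x) :=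
    (uniformCauchySeqOnFilter_slope hs hx hF
      (tendstoLocallyUniformlyOn_iff_filter.1 hF' x hx).uniformCauchySeqOnFilter
      ).tendstoUniformlyOnFilter_of_tendsto (eventually_nhdsWithin_of_forall slope_tendsto)
  rw [hasDerivWithinAt_iff_tendsto_slope]
  refine (slope_uniform.mono_right (nhdsWithin_mono x sdiff_subset)).tendsto_of_eventually_tendsto
    ?_ (hF'.tendsto_at hx)
  filter_upwards [hF] with n hn using hasDerivWithinAt_iff_tendsto_slope.1 (hn x hx)

theorem hasDerivWithinAt_of_tendstoLocallyUniformlyOn_vectorField [l.NeBot]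
    {X : ι → E → E} {Y : E → E} {U : Set E} {z : ι → 𝕜 → E} {ζ : 𝕜 → E} {t : 𝕜}
    (hs : Convex ℝ s) (hX : TendstoLocallyUniformlyOn X Y l U) (hY : ContinuousOn Y U)
    (hz : ∀ᶠ n in l, ∀ t ∈ s, HasDerivWithinAt (z n) (X n (z n t)) s t)
    (hzU : ∀ᶠ n in l, MapsTo (z n) s U) (hζU : MapsTo ζ s U)
    (hzζ : TendstoLocallyUniformlyOn z ζ l s) (ht : t ∈ s) :
    HasDerivWithinAt ζ (Y (ζ t)) s t := by
  have hζ : ContinuousOn ζ s :=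
    hzζ.continuousOn (hz.mono fun n hn t ht => (hn t ht).continuousWithinAt).frequently
  exact hasDerivWithinAt_of_tendstoLocallyUniformlyOn_of_convex hs hz
    (fun t ht => hzζ.tendsto_at ht)
    (tendstoLocallyUniformlyOn_comp_of_continuousOn hX hY hzζ hζ hzU hζU) ht

end Derivative

section Geodesic

variable {ι κ : Type*} [Fintype ι]

/-- The geodesic spray of the connection coefficients `Γ μ ρ ν = Γ^μ_{ρν}`: the vector field
`(x, u) ↦ (u, -Γ(x)(u, u))` on position-velocity pairs, whose integral curves are the pairs
`(γ, γ̇)` with `γ` a geodesic. -/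
noncomputable def geodesicSpray (Γ : ι → ι → ι → EuclideanSpace ℝ ι → ℝ)
    (z : EuclideanSpace ℝ ι × EuclideanSpace ℝ ι) : EuclideanSpace ℝ ι × EuclideanSpace ℝ ι :=
  (z.2, WithLp.toLp 2 fun μ => -∑ ρ, ∑ ν, Γ μ ρ ν z.1 * z.2 ρ * z.2 ν)

theorem geodesicSpray_eq_iff {Γ : ι → ι → ι → EuclideanSpace ℝ ι → ℝ}
    {x u w : EuclideanSpace ℝ ι} :
    geodesicSpray Γ (x, u) = (u, w) ↔ ∀ μ, w μ + ∑ ρ, ∑ ν, Γ μ ρ ν x * u ρ * u ν = 0 := by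
  simp only [geodesicSpray, Prod.mk.injEq, true_and, PiLp.ext_iff, eq_comm (b := w _),
    eq_neg_iff_add_eq_zero]

theorem tendsto_geodesicSpray {Γ : κ → ι → ι → ι → EuclideanSpace ℝ ι → ℝ}
    {Γ₀ : ι → ι → ι → EuclideanSpace ℝ ι → ℝ} {z : κ → EuclideanSpace ℝ ι × EuclideanSpace ℝ ι}
    {z₀ : EuclideanSpace ℝ ι × EuclideanSpace ℝ ι} {l : Filter κ}
    (hΓ : ∀ μ ρ ν, Tendsto (fun k => Γ k μ ρ ν (z k).1) l (𝓝 (Γ₀ μ ρ ν z₀.1)))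
    (hz : Tendsto z l (𝓝 z₀)) :
    Tendsto (fun k => geodesicSpray (Γ k) (z k)) l (𝓝 (geodesicSpray Γ₀ z₀)) := by
  have hvelocity : Tendsto (fun k => (z k).2) l (𝓝 z₀.2) := hz.snd_nhds
  have hcoord : ∀ i, Tendsto (fun k => (z k).2 i) l (𝓝 (z₀.2 i)) := fun i =>
    ((PiLp.continuous_apply 2 _ i).tendsto _).comp hvelocity
  refine hvelocity.prodMk_nhds
    (((PiLp.continuous_toLp 2 _).tendsto _).comp (tendsto_pi_nhds.2 fun μ => ?_))
  exact (tendsto_finsetSum _ fun ρ _ => tendsto_finsetSum _ fun ν _ =>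
    ((hΓ μ ρ ν).mul (hcoord ρ)).mul (hcoord ν)).neg

theorem continuousOn_geodesicSpray {Γ : ι → ι → ι → EuclideanSpace ℝ ι → ℝ}
    {Ω : Set (EuclideanSpace ℝ ι)} (hΓ : ∀ μ ρ ν, ContinuousOn (Γ μ ρ ν) Ω) :
    ContinuousOn (geodesicSpray Γ) (Ω ×ˢ univ) := fun z hz =>
  tendsto_geodesicSpray
    (fun μ ρ ν => (hΓ μ ρ ν).comp continuousOn_fst (fun _ h => h.1) z hz) continuousWithinAt_id

theorem tendstoLocallyUniformlyOn_geodesicSpray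
    {Γk : κ → ι → ι → ι → EuclideanSpace ℝ ι → ℝ} {Γ : ι → ι → ι → EuclideanSpace ℝ ι → ℝ}
    {Ω : Set (EuclideanSpace ℝ ι)} {l : Filter κ} (hΓ : ∀ μ ρ ν, ContinuousOn (Γ μ ρ ν) Ω)
    (hΓconv : ∀ μ ρ ν, TendstoLocallyUniformlyOn (fun k => Γk k μ ρ ν) (Γ μ ρ ν) l Ω) :
    TendstoLocallyUniformlyOn (fun k => geodesicSpray (Γk k)) (geodesicSpray Γ) l
      (Ω ×ˢ univ) := by
  have hfst : MapsTo Prod.fst (Ω ×ˢ (univ : Set (EuclideanSpace ℝ ι))) Ω := fun _ h => h.1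
  rw [tendstoLocallyUniformlyOn_iff_tendsto_prod_nhdsWithin (continuousOn_geodesicSpray hΓ)]
  intro z hz
  refine tendsto_geodesicSpray (fun μ ρ ν => ?_) (tendsto_nhds_of_tendsto_nhdsWithin tendsto_snd)
  exact (tendstoLocallyUniformlyOn_iff_tendsto_prod_nhdsWithin
    ((hΓ μ ρ ν).comp continuousOn_fst hfst)).1
      ((hΓconv μ ρ ν).comp Prod.fst hfst continuousOn_fst) z hz

theorem geodesics_stable_under_uniform_limits_general {l : Filter κ} [l.NeBot]
    {Ω : Set (EuclideanSpace ℝ ι)} {s : Set ℝ} (hs : Convex ℝ s)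
    {Γk : κ → ι → ι → ι → EuclideanSpace ℝ ι → ℝ} {Γ : ι → ι → ι → EuclideanSpace ℝ ι → ℝ}
    (hΓ : ∀ μ ρ ν, ContinuousOn (Γ μ ρ ν) Ω)
    (hΓconv : ∀ μ ρ ν, TendstoLocallyUniformlyOn (fun k => Γk k μ ρ ν) (Γ μ ρ ν) l Ω)
    {γk vk ak : κ → ℝ → EuclideanSpace ℝ ι} {γ v : ℝ → EuclideanSpace ℝ ι}
    (hγkΩ : ∀ k, MapsTo (γk k) s Ω) (hγΩ : MapsTo γ s Ω)
    (hdk : ∀ k, ∀ t ∈ s, HasDerivWithinAt (γk k) (vk k t) s t)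
    (hddk : ∀ k, ∀ t ∈ s, HasDerivWithinAt (vk k) (ak k t) s t)
    (hgeok : ∀ k, ∀ t ∈ s, ∀ μ,
      ak k t μ + (∑ ρ, ∑ ν, Γk k μ ρ ν (γk k t) * vk k t ρ * vk k t ν) = 0)
    (hγconv : TendstoLocallyUniformlyOn γk γ l s)
    (hvconv : TendstoLocallyUniformlyOn vk v l s) :
    (∀ t ∈ s, HasDerivWithinAt γ (v t) s t) ∧
    ∃ w : ℝ → EuclideanSpace ℝ ι,
      ContinuousOn w s ∧
      (∀ t ∈ s, HasDerivWithinAt v (w t) s t) ∧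
      (∀ t ∈ s, ∀ μ, w t μ + (∑ ρ, ∑ ν, Γ μ ρ ν (γ t) * v t ρ * v t ν) = 0) := by
  have integral_curve_k : ∀ k, ∀ t ∈ s, HasDerivWithinAt (fun t => (γk k t, vk k t))
      (geodesicSpray (Γk k) (γk k t, vk k t)) s t := fun k t ht => by
    rw [geodesicSpray_eq_iff.2 (hgeok k t ht)]
    exact (hdk k t ht).prodMk (hddk k t ht)
  have mapsTo_Ω : MapsTo (fun t => (γ t, v t)) s (Ω ×ˢ univ) := fun t ht => ⟨hγΩ ht, mem_univ _⟩
  have integral_curve : ∀ t ∈ s, HasDerivWithinAt (fun t => (γ t, v t))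
      (geodesicSpray Γ (γ t, v t)) s t := fun t ht =>
    hasDerivWithinAt_of_tendstoLocallyUniformlyOn_vectorField hs
      (tendstoLocallyUniformlyOn_geodesicSpray hΓ hΓconv) (continuousOn_geodesicSpray hΓ)
      (.of_forall integral_curve_k) (.of_forall fun k t ht => ⟨hγkΩ k ht, mem_univ _⟩)
      mapsTo_Ω (hγconv.prodMk hvconv) ht
  have continuousOn_curve : ContinuousOn (fun t => (γ t, v t)) s := fun t ht =>
    (integral_curve t ht).continuousWithinAt
  exact ⟨fun t ht => (integral_curve t ht).fst, fun t => (geodesicSpray Γ (γ t, v t)).2,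
    ((continuousOn_geodesicSpray hΓ).comp continuousOn_curve mapsTo_Ω).snd,
    fun t ht => (integral_curve t ht).snd, fun t _ => geodesicSpray_eq_iff.1 rfl⟩

end Geodesic

/-- Stability of classical geodesics under zero mollification limits: if continuous
connection coefficients `Γ_k` converge uniformly on `Ω` to `Γ`, and C² geodesics `γ_k`
of `Γ_k` on a compact interval `[a,b]` converge in `C¹` (i.e. `γ_k → γ` and
`γ̇_k → v` uniformly on `[a,b]`), then `γ` is a C² curve with `γ̇ = v` solving the
geodesic equation for `Γ` on `[a,b]`. -/
theorem geodesics_stable_under_uniform_limits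
    {n : ℕ} (hn : 1 ≤ n)
    (Ω : Set (EuclideanSpace ℝ (Fin n))) (hΩ : IsOpen Ω)
    (a b : ℝ) (hab : a ≤ b)
    (Γk : ℕ → Fin n → Fin n → Fin n → EuclideanSpace ℝ (Fin n) → ℝ)
    (Γ : Fin n → Fin n → Fin n → EuclideanSpace ℝ (Fin n) → ℝ)
    (hΓk : ∀ k μ ρ ν, ContinuousOn (Γk k μ ρ ν) Ω)
    (hΓ : ∀ μ ρ ν, ContinuousOn (Γ μ ρ ν) Ω)
    (hΓconv : ∀ μ ρ ν, TendstoUniformlyOn (fun k x => Γk k μ ρ ν x) (Γ μ ρ ν)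
      Filter.atTop Ω)
    (γk vk ak : ℕ → ℝ → EuclideanSpace ℝ (Fin n))
    (γ v : ℝ → EuclideanSpace ℝ (Fin n))
    (hγkΩ : ∀ k, ∀ t ∈ Set.Icc a b, γk k t ∈ Ω)
    (hγΩ : ∀ t ∈ Set.Icc a b, γ t ∈ Ω)
    (hdk : ∀ k, ∀ t ∈ Set.Icc a b, HasDerivWithinAt (γk k) (vk k t) (Set.Icc a b) t)
    (hddk : ∀ k, ∀ t ∈ Set.Icc a b, HasDerivWithinAt (vk k) (ak k t) (Set.Icc a b) t)
    (hak : ∀ k, ContinuousOn (ak k) (Set.Icc a b))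
    (hgeok : ∀ k, ∀ t ∈ Set.Icc a b, ∀ μ : Fin n,
      ak k t μ + (∑ ρ : Fin n, ∑ ν : Fin n,
        Γk k μ ρ ν (γk k t) * vk k t ρ * vk k t ν) = 0)
    (hγconv : TendstoUniformlyOn (fun k t => γk k t) γ Filter.atTop (Set.Icc a b))
    (hvconv : TendstoUniformlyOn (fun k t => vk k t) v Filter.atTop (Set.Icc a b)) :
    (∀ t ∈ Set.Icc a b, HasDerivWithinAt γ (v t) (Set.Icc a b) t) ∧
    ∃ w : ℝ → EuclideanSpace ℝ (Fin n),
      ContinuousOn w (Set.Icc a b) ∧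
      (∀ t ∈ Set.Icc a b, HasDerivWithinAt v (w t) (Set.Icc a b) t) ∧
      (∀ t ∈ Set.Icc a b, ∀ μ : Fin n,
        w t μ + (∑ ρ : Fin n, ∑ ν : Fin n,
          Γ μ ρ ν (γ t) * v t ρ * v t ν) = 0) :=
  geodesics_stable_under_uniform_limits_general (convex_Icc a b) hΓ
    (fun μ ρ ν => (hΓconv μ ρ ν).tendstoLocallyUniformlyOn) hγkΩ hγΩ hdk hddk hgeok
    hγconv.tendstoLocallyUniformlyOn hvconv.tendstoLocallyUniformlyOn
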